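/- Let J = 2, 0 < d_i < ρ < u_i for i = 1,2, and suppose κ = 1 − (ρ−d₁)/(u₁−d₁) − (ρ−d₂)/(u₂−d₂) = 0. Then for any convex sub-modular f : ℝ_+² → ℝ and any n ≥ 1, the n-step hedge price ρ^{−n}𝓑^n f(S₀¹,S₀²), where 𝓑 is the reduced Bellman operator, equals ρ^{−n} Σ_{k=0}^n C(n,k) ((ρ−d₁)/(u₁−d₁))^k ((ρ−d₂)/(u₂−d₂))^{n−k} f(u₁^k d₁^{n−k} S₀¹, d₂^k u₂^{n−k} S₀²), where C(n,k) is the binomial coefficient; equivalently, with q₁ = (ρ−d₁)/(u₁−d₁) and q₂ = (ρ−d₂)/(u₂−d₂) satisfying q₁ + q₂ = 1, the hedge price is the discounted binomial expectation of f where stock 1 moves up exactly when stock 2 moves down. -/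

import Mathlib

noncomputable section

/-- The reduced Bellman operator for the two-stock model:
`(𝓑f)(z₁,z₂) = min_γ max_{ξᵢ∈[dᵢ,uᵢ]} [f(ξ₁z₁,ξ₂z₂) − Σᵢ γ^i zᵢ(ξᵢ − ρ)]`. -/
def Bop2 (ρ d₁ d₂ u₁ u₂ : ℝ) (f : ℝ × ℝ → ℝ) : ℝ × ℝ → ℝ :=
  fun z => ⨅ γ : ℝ × ℝ,
    ⨆ ξ : { ξ : ℝ × ℝ // ξ.1 ∈ Set.Icc d₁ u₁ ∧ ξ.2 ∈ Set.Icc d₂ u₂ },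
      (f (ξ.1.1 * z.1, ξ.1.2 * z.2) - γ.1 * z.1 * (ξ.1.1 - ρ) - γ.2 * z.2 * (ξ.1.2 - ρ))

/-!
Sub-modularity and convexity in each coordinate put `f`, on a rectangle, below the affine function
that agrees with it at the lower-left corner and at the two adjacent corners. Hedging with the
slopes of this affine function makes the worst case at most the risk-neutral average over the two
adjacent corners, because `κ = 0` removes the lower-left value. No hedge does better: the hedging
gains have mean zero under that average. So `𝓑` is `q₁ • A + q₂ • B` for two commuting dilations
`A` and `B`, and its iterates are given by the binomial theorem.
-/

section Dilation

/-- The representation of a commutative monoid `M` on functions `M → R` by dilations,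
`f ↦ (z ↦ f (a * z))`. As a monoid homomorphism it turns powers of `a` into iterates. -/
def dilation (R M : Type*) [CommSemiring R] [CommMonoid M] : M →* Module.End R (M → R) where
  toFun a := LinearMap.funLeft R R (a * ·)
  map_one' := by ext f z; simp [LinearMap.funLeft_apply]
  map_mul' a b := by ext f z; simp [LinearMap.funLeft_apply, mul_left_comm, mul_assoc]

variable {R M : Type*} [CommSemiring R] [CommMonoid M]

/-- The one-step operator of a binomial tree: `z` moves to `a * z` with weight `p` and to `b * z`
with weight `q`. -/
def binomialStep (p q : R) (a b : M) : Module.End R (M → R) :=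
  p • dilation R M a + q • dilation R M b

theorem dilation_apply (a : M) (f : M → R) (z : M) : dilation R M a f z = f (a * z) := rfl

theorem binomialStep_apply (p q : R) (a b : M) (f : M → R) (z : M) :
    binomialStep p q a b f z = p * f (a * z) + q * f (b * z) := rfl

theorem binomialStep_pow_apply (p q : R) (a b : M) (n : ℕ) (f : M → R) (z : M) :
    (binomialStep p q a b ^ n) f z =
      ∑ k ∈ Finset.range (n + 1),
        (n.choose k : R) * p ^ k * q ^ (n - k) * f (a ^ k * b ^ (n - k) * z) := by
  have hcomm : Commute (p • dilation R M a) (q • dilation R M b) :=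
    (((Commute.all a b).map (dilation R M)).smul_left p).smul_right q
  rw [binomialStep, hcomm.add_pow, LinearMap.sum_apply, Finset.sum_apply]
  refine Finset.sum_congr rfl fun k _ => ?_
  rw [smul_pow, smul_pow, ← map_pow, ← map_pow, smul_mul_smul_comm, ← map_mul,
    ← nsmul_eq_mul', LinearMap.smul_apply, LinearMap.smul_apply, Pi.smul_apply, Pi.smul_apply,
    dilation_apply, nsmul_eq_mul, smul_eq_mul]
  ring

end Dilation

/-- The weight of `u` when `x` is written as an affine combination of `d` and `u`. At `x = ρ` it is
the risk-neutral probability of an up-move. -/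
def upWeight (d u x : ℝ) : ℝ := (x - d) / (u - d)

section UpWeight

variable {d u x : ℝ}

theorem upWeight_nonneg (hdu : d < u) (hx : d ≤ x) : 0 ≤ upWeight d u x :=
  div_nonneg (sub_nonneg.2 hx) (sub_pos.2 hdu).le

theorem upWeight_le_one (hdu : d < u) (hx : x ≤ u) : upWeight d u x ≤ 1 :=
  (div_le_one (sub_pos.2 hdu)).2 (sub_le_sub_right hx d)

theorem upWeight_mul_sub (hdu : d < u) (x : ℝ) : upWeight d u x * (u - d) = x - d :=
  div_mul_cancel₀ _ (sub_pos.2 hdu).ne'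

end UpWeight

/-- Sub-modular functions on the closed positive quadrant that are convex in each coordinate
separately; this is weaker than joint convexity. -/
structure CoordConvexSubmodular (f : ℝ × ℝ → ℝ) : Prop where
  convexOn_fst : ∀ y, 0 ≤ y → ConvexOn ℝ (Set.Ici 0) fun x => f (x, y)
  convexOn_snd : ∀ x, 0 ≤ x → ConvexOn ℝ (Set.Ici 0) fun y => f (x, y)
  submodular : ∀ x₁ y₁ x₂ y₂ : ℝ, 0 ≤ x₁ → x₁ ≤ y₁ → 0 ≤ x₂ → x₂ ≤ y₂ →
    f (x₁, x₂) + f (y₁, y₂) ≤ f (x₁, y₂) + f (y₁, x₂)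

namespace CoordConvexSubmodular

variable {f g : ℝ × ℝ → ℝ}

theorem of_convexOn (hconv : ConvexOn ℝ (Set.Ici (0 : ℝ) ×ˢ Set.Ici (0 : ℝ)) f)
    (hsub : ∀ x₁ y₁ x₂ y₂ : ℝ, 0 ≤ x₁ → x₁ ≤ y₁ → 0 ≤ x₂ → x₂ ≤ y₂ →
      f (x₁, x₂) + f (y₁, y₂) ≤ f (x₁, y₂) + f (y₁, x₂)) :
    CoordConvexSubmodular f where
  convexOn_fst y hy :=
    (hconv.comp_affineMap ((AffineMap.id ℝ ℝ).prod (AffineMap.const ℝ ℝ y))).subset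
      (fun _ hx => ⟨hx, hy⟩) (convex_Ici 0)
  convexOn_snd x hx :=
    (hconv.comp_affineMap ((AffineMap.const ℝ ℝ x).prod (AffineMap.id ℝ ℝ))).subset
      (fun _ hy => ⟨hx, hy⟩) (convex_Ici 0)
  submodular := hsub

theorem congr (hf : CoordConvexSubmodular f) (hfg : Set.EqOn f g (Set.Ici 0)) :
    CoordConvexSubmodular g where
  convexOn_fst y hy := (hf.convexOn_fst y hy).congr fun _ hx => hfg ⟨hx, hy⟩
  convexOn_snd x hx := (hf.convexOn_snd x hx).congr fun _ hy => hfg ⟨hx, hy⟩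
  submodular x₁ y₁ x₂ y₂ hx₁ hxy₁ hx₂ hxy₂ := by
    have hy₁ := hx₁.trans hxy₁
    have hy₂ := hx₂.trans hxy₂
    rw [← hfg ⟨hx₁, hx₂⟩, ← hfg ⟨hy₁, hy₂⟩, ← hfg ⟨hx₁, hy₂⟩, ← hfg ⟨hy₁, hx₂⟩]
    exact hf.submodular x₁ y₁ x₂ y₂ hx₁ hxy₁ hx₂ hxy₂

theorem add (hf : CoordConvexSubmodular f) (hg : CoordConvexSubmodular g) :
    CoordConvexSubmodular (f + g) where
  convexOn_fst y hy := (hf.convexOn_fst y hy).add (hg.convexOn_fst y hy)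
  convexOn_snd x hx := (hf.convexOn_snd x hx).add (hg.convexOn_snd x hx)
  submodular x₁ y₁ x₂ y₂ hx₁ hxy₁ hx₂ hxy₂ := by
    have hf' := hf.submodular x₁ y₁ x₂ y₂ hx₁ hxy₁ hx₂ hxy₂
    have hg' := hg.submodular x₁ y₁ x₂ y₂ hx₁ hxy₁ hx₂ hxy₂
    simp only [Pi.add_apply]
    linarith

theorem smul {c : ℝ} (hc : 0 ≤ c) (hf : CoordConvexSubmodular f) :
    CoordConvexSubmodular (c • f) where
  convexOn_fst y hy := (hf.convexOn_fst y hy).smul hc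
  convexOn_snd x hx := (hf.convexOn_snd x hx).smul hc
  submodular x₁ y₁ x₂ y₂ hx₁ hxy₁ hx₂ hxy₂ := by
    simp only [Pi.smul_apply, smul_eq_mul, ← mul_add]
    exact mul_le_mul_of_nonneg_left (hf.submodular x₁ y₁ x₂ y₂ hx₁ hxy₁ hx₂ hxy₂) hc

theorem dilation {a : ℝ × ℝ} (ha : 0 ≤ a) (hf : CoordConvexSubmodular f) :
    CoordConvexSubmodular (dilation ℝ (ℝ × ℝ) a f) where
  convexOn_fst y hy :=
    ((hf.convexOn_fst (a.2 * y) (mul_nonneg ha.2 hy)).comp_linearMap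
      (LinearMap.mulLeft ℝ a.1)).subset (fun _ hx => mul_nonneg ha.1 hx) (convex_Ici 0)
  convexOn_snd x hx :=
    ((hf.convexOn_snd (a.1 * x) (mul_nonneg ha.1 hx)).comp_linearMap
      (LinearMap.mulLeft ℝ a.2)).subset (fun _ hy => mul_nonneg ha.2 hy) (convex_Ici 0)
  submodular _ _ _ _ hx₁ hxy₁ hx₂ hxy₂ :=
    hf.submodular _ _ _ _ (mul_nonneg ha.1 hx₁) (mul_le_mul_of_nonneg_left hxy₁ ha.1)
      (mul_nonneg ha.2 hx₂) (mul_le_mul_of_nonneg_left hxy₂ ha.2)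

theorem binomialStep {p q : ℝ} {a b : ℝ × ℝ} (hp : 0 ≤ p) (hq : 0 ≤ q) (ha : 0 ≤ a)
    (hb : 0 ≤ b) (hf : CoordConvexSubmodular f) :
    CoordConvexSubmodular (binomialStep p q a b f) :=
  ((hf.dilation ha).smul hp).add ((hf.dilation hb).smul hq)

theorem le_affine_of_corners (hf : CoordConvexSubmodular f) {a₁ b₁ a₂ b₂ s t : ℝ}
    (ha₁ : 0 ≤ a₁) (hab₁ : a₁ ≤ b₁) (ha₂ : 0 ≤ a₂) (hab₂ : a₂ ≤ b₂)
    (hs₀ : 0 ≤ s) (hs₁ : s ≤ 1) (ht₀ : 0 ≤ t) (ht₁ : t ≤ 1) :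
    f ((1 - s) * a₁ + s * b₁, (1 - t) * a₂ + t * b₂) ≤
      f (a₁, a₂) + s * (f (b₁, a₂) - f (a₁, a₂)) + t * (f (a₁, b₂) - f (a₁, a₂)) := by
  have hb₁ : 0 ≤ b₁ := ha₁.trans hab₁
  have hb₂ : 0 ≤ b₂ := ha₂.trans hab₂
  have hs' : 0 ≤ 1 - s := sub_nonneg.2 hs₁
  have ht' : 0 ≤ 1 - t := sub_nonneg.2 ht₁
  have vertical : ∀ x, 0 ≤ x →
      f (x, (1 - t) * a₂ + t * b₂) ≤ (1 - t) * f (x, a₂) + t * f (x, b₂) := fun x hx =>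
    (hf.convexOn_snd x hx).2 ha₂ hb₂ ht' ht₀ (sub_add_cancel 1 t)
  have horizontal : f ((1 - s) * a₁ + s * b₁, (1 - t) * a₂ + t * b₂) ≤
      (1 - s) * f (a₁, (1 - t) * a₂ + t * b₂) + s * f (b₁, (1 - t) * a₂ + t * b₂) :=
    (hf.convexOn_fst _ (by positivity)).2 ha₁ hb₁ hs' hs₀ (sub_add_cancel 1 s)
  have mixed : s * t * (f (a₁, a₂) + f (b₁, b₂)) ≤ s * t * (f (a₁, b₂) + f (b₁, a₂)) :=
    mul_le_mul_of_nonneg_left (hf.submodular _ _ _ _ ha₁ hab₁ ha₂ hab₂) (mul_nonneg hs₀ ht₀)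
  have left := mul_le_mul_of_nonneg_left (vertical a₁ ha₁) hs'
  have right := mul_le_mul_of_nonneg_left (vertical b₁ hb₁) hs₀
  linarith

end CoordConvexSubmodular

/-- The quantity optimised in `Bop2`: what remains of the payoff `f` after the hedge `γ`, when the
prices `z` move by the factors `ξ`. -/
def hedgedLoss (ρ : ℝ) (f : ℝ × ℝ → ℝ) (z γ ξ : ℝ × ℝ) : ℝ :=
  f (ξ.1 * z.1, ξ.2 * z.2) - γ.1 * z.1 * (ξ.1 - ρ) - γ.2 * z.2 * (ξ.2 - ρ)

/-- Two-stock market parameters for which the quantity `κ` of the model vanishes,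
bundled for the one-step formula and its iteration. -/
structure IsTwoColorMarket (ρ d₁ d₂ u₁ u₂ : ℝ) : Prop where
  d₁_nonneg : 0 ≤ d₁
  d₂_nonneg : 0 ≤ d₂
  d₁_lt_u₁ : d₁ < u₁
  d₂_lt_u₂ : d₂ < u₂
  d₁_le : d₁ ≤ ρ
  d₂_le : d₂ ≤ ρ
  upWeight_add : upWeight d₁ u₁ ρ + upWeight d₂ u₂ ρ = 1

/-- The risk-neutral one-step expectation in the two-color model, where stock 1 moves up exactly
when stock 2 moves down. -/
def twoColorStep (ρ d₁ d₂ u₁ u₂ : ℝ) : Module.End ℝ (ℝ × ℝ → ℝ) :=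
  binomialStep (upWeight d₁ u₁ ρ) (upWeight d₂ u₂ ρ) (u₁, d₂) (d₁, u₂)

section OneStep

variable {ρ d₁ d₂ u₁ u₂ : ℝ} {f : ℝ × ℝ → ℝ} {z : ℝ × ℝ}

theorem twoColorStep_apply (ρ d₁ d₂ u₁ u₂ : ℝ) (f : ℝ × ℝ → ℝ) (z : ℝ × ℝ) :
    twoColorStep ρ d₁ d₂ u₁ u₂ f z =
      upWeight d₁ u₁ ρ * f (u₁ * z.1, d₂ * z.2) + upWeight d₂ u₂ ρ * f (d₁ * z.1, u₂ * z.2) :=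
  binomialStep_apply ..

theorem hedgedLoss_average (hdu₁ : d₁ < u₁) (hdu₂ : d₂ < u₂)
    (hq : upWeight d₁ u₁ ρ + upWeight d₂ u₂ ρ = 1) (f : ℝ × ℝ → ℝ) (z γ : ℝ × ℝ) :
    upWeight d₁ u₁ ρ * hedgedLoss ρ f z γ (u₁, d₂) +
      upWeight d₂ u₂ ρ * hedgedLoss ρ f z γ (d₁, u₂) = twoColorStep ρ d₁ d₂ u₁ u₂ f z := by
  have mean₁ : upWeight d₁ u₁ ρ * (u₁ - ρ) + upWeight d₂ u₂ ρ * (d₁ - ρ) = 0 := by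
    linear_combination upWeight_mul_sub hdu₁ ρ + (d₁ - ρ) * hq
  have mean₂ : upWeight d₁ u₁ ρ * (d₂ - ρ) + upWeight d₂ u₂ ρ * (u₂ - ρ) = 0 := by
    linear_combination upWeight_mul_sub hdu₂ ρ + (d₂ - ρ) * hq
  rw [twoColorStep_apply]
  simp only [hedgedLoss]
  linear_combination -(γ.1 * z.1) * mean₁ - γ.2 * z.2 * mean₂

theorem CoordConvexSubmodular.le_affine_upWeight (hf : CoordConvexSubmodular f) (hd₁ : 0 ≤ d₁)
    (hd₂ : 0 ≤ d₂) (hdu₁ : d₁ < u₁) (hdu₂ : d₂ < u₂) (hz : 0 ≤ z) {ξ : ℝ × ℝ}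
    (hξ : ξ ∈ Set.Icc d₁ u₁ ×ˢ Set.Icc d₂ u₂) :
    f (ξ.1 * z.1, ξ.2 * z.2) ≤ f (d₁ * z.1, d₂ * z.2) +
      upWeight d₁ u₁ ξ.1 * (f (u₁ * z.1, d₂ * z.2) - f (d₁ * z.1, d₂ * z.2)) +
      upWeight d₂ u₂ ξ.2 * (f (d₁ * z.1, u₂ * z.2) - f (d₁ * z.1, d₂ * z.2)) := by
  obtain ⟨⟨hdξ₁, hξu₁⟩, hdξ₂, hξu₂⟩ := hξ
  have interp {d u : ℝ} (hdu : d < u) (x w : ℝ) :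
      (1 - upWeight d u x) * (d * w) + upWeight d u x * (u * w) = x * w := by
    linear_combination w * upWeight_mul_sub hdu x
  have key := hf.le_affine_of_corners
    (mul_nonneg hd₁ hz.1) (mul_le_mul_of_nonneg_right hdu₁.le hz.1)
    (mul_nonneg hd₂ hz.2) (mul_le_mul_of_nonneg_right hdu₂.le hz.2)
    (upWeight_nonneg hdu₁ hdξ₁) (upWeight_le_one hdu₁ hξu₁)
    (upWeight_nonneg hdu₂ hdξ₂) (upWeight_le_one hdu₂ hξu₂)
  rwa [interp hdu₁, interp hdu₂] at key

theorem exists_mul_sub_eq_upWeight_mul (d u ρ w : ℝ) (g : ℝ → ℝ) :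
    ∃ γ : ℝ, ∀ x, γ * w * (x - ρ) =
      (upWeight d u x - upWeight d u ρ) * (g (u * w) - g (d * w)) := by
  -- At `w = 0` the division below returns `0`, which is right since then `g (u * w) = g (d * w)`.
  refine ⟨(g (u * w) - g (d * w)) / (u - d) / w, fun x => ?_⟩
  have cancel : (g (u * w) - g (d * w)) / (u - d) / w * w =
      (g (u * w) - g (d * w)) / (u - d) :=
    div_mul_cancel_of_imp fun hw => by simp [hw]
  rw [cancel, upWeight, upWeight]
  ring

theorem CoordConvexSubmodular.exists_hedgedLoss_le (hf : CoordConvexSubmodular f) (hd₁ : 0 ≤ d₁)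
    (hd₂ : 0 ≤ d₂) (hdu₁ : d₁ < u₁) (hdu₂ : d₂ < u₂)
    (hq : upWeight d₁ u₁ ρ + upWeight d₂ u₂ ρ = 1) (hz : 0 ≤ z) :
    ∃ γ : ℝ × ℝ, ∀ ξ ∈ Set.Icc d₁ u₁ ×ˢ Set.Icc d₂ u₂,
      hedgedLoss ρ f z γ ξ ≤ twoColorStep ρ d₁ d₂ u₁ u₂ f z := by
  obtain ⟨γ₁, hγ₁⟩ := exists_mul_sub_eq_upWeight_mul d₁ u₁ ρ z.1 fun x => f (x, d₂ * z.2)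
  obtain ⟨γ₂, hγ₂⟩ := exists_mul_sub_eq_upWeight_mul d₂ u₂ ρ z.2 fun y => f (d₁ * z.1, y)
  refine ⟨(γ₁, γ₂), fun ξ hξ => ?_⟩
  have affine_bound := hf.le_affine_upWeight hd₁ hd₂ hdu₁ hdu₂ hz hξ
  have corner : (upWeight d₁ u₁ ρ + upWeight d₂ u₂ ρ) * f (d₁ * z.1, d₂ * z.2) =
      f (d₁ * z.1, d₂ * z.2) := by rw [hq, one_mul]
  rw [hedgedLoss, hγ₁, hγ₂, twoColorStep_apply]
  linarith

theorem bddAbove_range_hedgedLoss {B : Set (ℝ × ℝ)} {γ₀ : ℝ × ℝ} {C : ℝ} (hB : IsCompact B)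
    (hγ₀ : ∀ ξ ∈ B, hedgedLoss ρ f z γ₀ ξ ≤ C) (γ : ℝ × ℝ) :
    BddAbove (Set.range fun ξ : B => hedgedLoss ρ f z γ ξ) := by
  -- `f` need not be continuous, but changing the hedge adds a continuous function of `ξ`.
  have change_continuous : Continuous fun ξ : ℝ × ℝ =>
      (γ₀.1 - γ.1) * z.1 * (ξ.1 - ρ) + (γ₀.2 - γ.2) * z.2 * (ξ.2 - ρ) := by fun_prop
  obtain ⟨M, hM⟩ := hB.bddAbove_image change_continuous.continuousOn
  refine ⟨C + M, ?_⟩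
  rintro _ ⟨⟨ξ, hξ⟩, rfl⟩
  have change_le := hM (Set.mem_image_of_mem _ hξ)
  have loss_le := hγ₀ ξ hξ
  simp only [hedgedLoss] at loss_le ⊢
  linarith

end OneStep

namespace IsTwoColorMarket

variable {ρ d₁ d₂ u₁ u₂ : ℝ} {f : ℝ × ℝ → ℝ} {z : ℝ × ℝ}

theorem upWeight_nonneg₁ (h : IsTwoColorMarket ρ d₁ d₂ u₁ u₂) : 0 ≤ upWeight d₁ u₁ ρ :=
  upWeight_nonneg h.d₁_lt_u₁ h.d₁_le

theorem upWeight_nonneg₂ (h : IsTwoColorMarket ρ d₁ d₂ u₁ u₂) : 0 ≤ upWeight d₂ u₂ ρ :=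
  upWeight_nonneg h.d₂_lt_u₂ h.d₂_le

theorem zero_le_u₁_d₂ (h : IsTwoColorMarket ρ d₁ d₂ u₁ u₂) : (0 : ℝ × ℝ) ≤ (u₁, d₂) :=
  ⟨h.d₁_nonneg.trans h.d₁_lt_u₁.le, h.d₂_nonneg⟩

theorem zero_le_d₁_u₂ (h : IsTwoColorMarket ρ d₁ d₂ u₁ u₂) : (0 : ℝ × ℝ) ≤ (d₁, u₂) :=
  ⟨h.d₁_nonneg, h.d₂_nonneg.trans h.d₂_lt_u₂.le⟩

theorem twoColorStep_le_iSup_hedgedLoss (h : IsTwoColorMarket ρ d₁ d₂ u₁ u₂) {γ : ℝ × ℝ}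
    (hbdd : BddAbove (Set.range fun ξ : ↥(Set.Icc d₁ u₁ ×ˢ Set.Icc d₂ u₂) =>
      hedgedLoss ρ f z γ ξ)) :
    twoColorStep ρ d₁ d₂ u₁ u₂ f z ≤
      ⨆ ξ : ↥(Set.Icc d₁ u₁ ×ˢ Set.Icc d₂ u₂), hedgedLoss ρ f z γ ξ := by
  set M := ⨆ ξ : ↥(Set.Icc d₁ u₁ ×ˢ Set.Icc d₂ u₂), hedgedLoss ρ f z γ ξ
  have le_left : hedgedLoss ρ f z γ (u₁, d₂) ≤ M :=
    le_ciSup hbdd ⟨(u₁, d₂), Set.right_mem_Icc.2 h.d₁_lt_u₁.le, Set.left_mem_Icc.2 h.d₂_lt_u₂.le⟩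
  have le_right : hedgedLoss ρ f z γ (d₁, u₂) ≤ M :=
    le_ciSup hbdd ⟨(d₁, u₂), Set.left_mem_Icc.2 h.d₁_lt_u₁.le, Set.right_mem_Icc.2 h.d₂_lt_u₂.le⟩
  calc twoColorStep ρ d₁ d₂ u₁ u₂ f z
      = upWeight d₁ u₁ ρ * hedgedLoss ρ f z γ (u₁, d₂) +
          upWeight d₂ u₂ ρ * hedgedLoss ρ f z γ (d₁, u₂) :=
        (hedgedLoss_average h.d₁_lt_u₁ h.d₂_lt_u₂ h.upWeight_add f z γ).symm
    _ ≤ upWeight d₁ u₁ ρ * M + upWeight d₂ u₂ ρ * M :=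
        add_le_add (mul_le_mul_of_nonneg_left le_left h.upWeight_nonneg₁)
          (mul_le_mul_of_nonneg_left le_right h.upWeight_nonneg₂)
    _ = M := by rw [← add_mul, h.upWeight_add, one_mul]

theorem Bop2_apply (h : IsTwoColorMarket ρ d₁ d₂ u₁ u₂) (hf : CoordConvexSubmodular f)
    (hz : 0 ≤ z) : Bop2 ρ d₁ d₂ u₁ u₂ f z = twoColorStep ρ d₁ d₂ u₁ u₂ f z := by
  obtain ⟨γ₀, hγ₀⟩ := hf.exists_hedgedLoss_le h.d₁_nonneg h.d₂_nonneg h.d₁_lt_u₁ h.d₂_lt_u₂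
    h.upWeight_add hz
  have lower (γ : ℝ × ℝ) : twoColorStep ρ d₁ d₂ u₁ u₂ f z ≤
      ⨆ ξ : ↥(Set.Icc d₁ u₁ ×ˢ Set.Icc d₂ u₂), hedgedLoss ρ f z γ ξ :=
    h.twoColorStep_le_iSup_hedgedLoss
      (bddAbove_range_hedgedLoss (isCompact_Icc.prod isCompact_Icc) hγ₀ γ)
  have : Nonempty ↥(Set.Icc d₁ u₁ ×ˢ Set.Icc d₂ u₂) :=
    ⟨⟨(d₁, d₂), Set.left_mem_Icc.2 h.d₁_lt_u₁.le, Set.left_mem_Icc.2 h.d₂_lt_u₂.le⟩⟩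
  have upper : ⨆ ξ : ↥(Set.Icc d₁ u₁ ×ˢ Set.Icc d₂ u₂), hedgedLoss ρ f z γ₀ ξ ≤
      twoColorStep ρ d₁ d₂ u₁ u₂ f z :=
    ciSup_le fun ξ => hγ₀ ξ ξ.2
  exact le_antisymm (ciInf_le_of_le ⟨_, Set.forall_mem_range.2 lower⟩ γ₀ upper) (le_ciInf lower)

theorem coordConvexSubmodular_Bop2 (h : IsTwoColorMarket ρ d₁ d₂ u₁ u₂)
    (hf : CoordConvexSubmodular f) : CoordConvexSubmodular (Bop2 ρ d₁ d₂ u₁ u₂ f) :=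
  (hf.binomialStep h.upWeight_nonneg₁ h.upWeight_nonneg₂ h.zero_le_u₁_d₂ h.zero_le_d₁_u₂).congr
    fun _ hz => (h.Bop2_apply hf hz).symm

theorem coordConvexSubmodular_Bop2_iterate (h : IsTwoColorMarket ρ d₁ d₂ u₁ u₂)
    (hf : CoordConvexSubmodular f) (n : ℕ) :
    CoordConvexSubmodular ((Bop2 ρ d₁ d₂ u₁ u₂)^[n] f) :=
  Function.Iterate.rec CoordConvexSubmodular hf (fun _ => h.coordConvexSubmodular_Bop2) n

theorem Bop2_iterate_apply (h : IsTwoColorMarket ρ d₁ d₂ u₁ u₂) (hf : CoordConvexSubmodular f)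
    (n : ℕ) (hz : 0 ≤ z) :
    (Bop2 ρ d₁ d₂ u₁ u₂)^[n] f z = (twoColorStep ρ d₁ d₂ u₁ u₂ ^ n) f z := by
  induction n generalizing z with
  | zero => rfl
  | succ n ih =>
    rw [Function.iterate_succ_apply',
      h.Bop2_apply (h.coordConvexSubmodular_Bop2_iterate hf n) hz, pow_succ',
      Module.End.mul_apply, twoColorStep, binomialStep_apply, binomialStep_apply,
      ih (mul_nonneg h.zero_le_u₁_d₂ hz), ih (mul_nonneg h.zero_le_d₁_u₂ hz), twoColorStep]

end IsTwoColorMarket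

theorem stmt17_general (ρ d₁ d₂ u₁ u₂ : ℝ) (hd₁ : 0 ≤ d₁) (hd₂ : 0 ≤ d₂)
    (hdρ₁ : d₁ ≤ ρ) (hdρ₂ : d₂ ≤ ρ) (hdu₁ : d₁ < u₁) (hdu₂ : d₂ < u₂)
    (hκ : 1 - (ρ - d₁) / (u₁ - d₁) - (ρ - d₂) / (u₂ - d₂) = 0)
    (f : ℝ × ℝ → ℝ) (hf : CoordConvexSubmodular f) (n : ℕ) (S₁ S₂ : ℝ)
    (hS₁ : 0 ≤ S₁) (hS₂ : 0 ≤ S₂) :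
    ((Bop2 ρ d₁ d₂ u₁ u₂)^[n] f) (S₁, S₂) =
      ∑ k ∈ Finset.range (n + 1), (n.choose k : ℝ) *
        ((ρ - d₁) / (u₁ - d₁)) ^ k * ((ρ - d₂) / (u₂ - d₂)) ^ (n - k) *
        f (u₁ ^ k * d₁ ^ (n - k) * S₁, d₂ ^ k * u₂ ^ (n - k) * S₂) := by
  have h : IsTwoColorMarket ρ d₁ d₂ u₁ u₂ :=
    ⟨hd₁, hd₂, hdu₁, hdu₂, hdρ₁, hdρ₂, by simp only [upWeight]; linarith⟩
  rw [h.Bop2_iterate_apply hf n ⟨hS₁, hS₂⟩]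
  exact binomialStep_pow_apply _ _ _ _ n f (S₁, S₂)

theorem stmt17 (ρ d₁ d₂ u₁ u₂ : ℝ)
    (hd₁ : 0 < d₁) (hd₂ : 0 < d₂) (h₁ : d₁ < ρ) (h₂ : d₂ < ρ)
    (h₃ : ρ < u₁) (h₄ : ρ < u₂)
    (hκ : 1 - (ρ - d₁) / (u₁ - d₁) - (ρ - d₂) / (u₂ - d₂) = 0)
    (f : ℝ × ℝ → ℝ)
    (hconv : ConvexOn ℝ (Set.Ici (0 : ℝ) ×ˢ Set.Ici (0 : ℝ)) f)
    -- f is sub-modular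
    (hsub : ∀ x₁ y₁ x₂ y₂ : ℝ, 0 ≤ x₁ → x₁ ≤ y₁ → 0 ≤ x₂ → x₂ ≤ y₂ →
      f (x₁, x₂) + f (y₁, y₂) ≤ f (x₁, y₂) + f (y₁, x₂))
    (n : ℕ) (hn : 1 ≤ n) (S₁ S₂ : ℝ) (hS₁ : 0 < S₁) (hS₂ : 0 < S₂) :
    -- the n-step hedge price ρ^{-n} 𝓑^n f equals the two-color Cox-Ross-Rubinstein value
    ((Bop2 ρ d₁ d₂ u₁ u₂)^[n] f) (S₁, S₂) / ρ ^ n =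
      (∑ k ∈ Finset.range (n + 1), (n.choose k : ℝ) *
        ((ρ - d₁) / (u₁ - d₁)) ^ k * ((ρ - d₂) / (u₂ - d₂)) ^ (n - k) *
        f (u₁ ^ k * d₁ ^ (n - k) * S₁, d₂ ^ k * u₂ ^ (n - k) * S₂)) / ρ ^ n := by
  rw [stmt17_general ρ d₁ d₂ u₁ u₂ hd₁.le hd₂.le h₁.le h₂.le (h₁.trans h₃) (h₂.trans h₄) hκ f
    (.of_convexOn hconv hsub) n S₁ S₂ hS₁.le hS₂.le]
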